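/- There are exactly 45 triangles: the set of 3-element subsets {L₁, L₂, L₃} of pairwise distinct lines with L₁ + L₂ + L₃ = −K is finite and has cardinality 45. -/

import Mathlib

/-- The symmetric bilinear form of signature (1,6) on the lattice `Fin 7 → ℤ`,
modelling the Picard lattice of a smooth cubic surface. -/
def B (x y : Fin 7 → ℤ) : ℤ :=
  x 0 * y 0 - x 1 * y 1 - x 2 * y 2 - x 3 * y 3 - x 4 * y 4 - x 5 * y 5 - x 6 * y 6

/-- The canonical class `K = (-3,1,1,1,1,1,1)`. -/
def K : Fin 7 → ℤ := ![-3, 1, 1, 1, 1, 1, 1]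

/-- A line is a vector `L` with `⟨L,L⟩ = -1` and `⟨L,K⟩ = -1`. -/
def IsLine (L : Fin 7 → ℤ) : Prop := B L L = -1 ∧ B L K = -1

/-- A triangle is a 3-element set of (pairwise distinct) lines summing to `-K`. -/
def IsTriangle (T : Finset (Fin 7 → ℤ)) : Prop :=
  T.card = 3 ∧ (∀ L ∈ T, IsLine L) ∧ ∑ L ∈ T, L = -K

/-!
The orthogonal complement of `K` is negative definite (a Hodge index theorem, here a consequence of
the Cauchy–Schwarz inequality). Applied to `L - M` and to `3 (L + M) + 2 K`, this shows that
distinct lines satisfy `⟨L, M⟩ ∈ {0, 1}`. Since `-K - L - M` is again a line exactly when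
`⟨L, M⟩ = 1`, each triangle accounts for six of the ordered pairs of lines with `⟨L, M⟩ = 1`.

Write `L = (a, b)` with `b ∈ ℤ⁶`. For a line, Cauchy–Schwarz gives `a ∈ {0, 1, 2}`, and then
`∑ bᵢ² = a² + 1 = |1 - 3 a| = |∑ bᵢ|`, so all nonzero `bᵢ` equal the sign of `1 - 3 a`. Hence there
are `6 + 15 + 6 = 27` lines, and their sum is `-9 K`. Pairing this sum with a line `L` gives
`9 = -1 + #{M | ⟨L, M⟩ = 1}`: every line meets ten others, and there are `27 * 10 / 6 = 45`
triangles.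
-/

open Finset

section Triples

variable {A : Type*} [AddCommGroup A] [DecidableEq A]

theorem mem_offDiag_and_sum_eq_iff {T : Finset A} {x y c : A} :
    ((x, y) ∈ T.offDiag ∧ #T = 3 ∧ ∑ z ∈ T, z = c) ↔
      x ≠ y ∧ c - x - y ∉ ({x, y} : Finset A) ∧ T = {x, y, c - x - y} := by
  constructor
  · rintro ⟨hxy, hT, rfl⟩
    obtain ⟨hx, hy, hne⟩ := mem_offDiag.1 hxy
    obtain ⟨z, hz, rfl⟩ : ∃ z ∉ ({x, y} : Finset A), insert z {x, y} = T :=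
      exists_eq_insert_iff.2 ⟨by simp [insert_subset_iff, hx, hy], by simp [hT, hne]⟩
    have hthird : ∑ w ∈ insert z {x, y}, w - x - y = z := by
      rw [sum_insert hz, sum_pair hne]
      abel
    rw [hthird]
    exact ⟨hne, hz, by grind⟩
  · rintro ⟨hne, hz, hT⟩
    obtain rfl : T = insert (c - x - y) {x, y} := by grind
    refine ⟨by simp [hne], by rw [card_insert_of_notMem hz, card_pair hne], ?_⟩
    rw [sum_insert hz, sum_pair hne]
    abel

theorem six_mul_card_filter_sum_eq (S : Finset A) (c : A) :
    6 * #{T ∈ S.powersetCard 3 | ∑ x ∈ T, x = c} =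
      #{p ∈ S.offDiag | c - p.1 - p.2 ∈ S \ {p.1, p.2}} := by
  set triples := {T ∈ S.powersetCard 3 | ∑ x ∈ T, x = c} with htriples
  have mem_triples {T} : T ∈ triples ↔ T ⊆ S ∧ #T = 3 ∧ ∑ x ∈ T, x = c := by
    rw [htriples, mem_filter, mem_powersetCard, and_assoc]
  have hpairs : {p ∈ S.offDiag | c - p.1 - p.2 ∈ S \ {p.1, p.2}} = triples.biUnion offDiag := by
    ext ⟨x, y⟩
    simp only [mem_biUnion, mem_filter, mem_sdiff, mem_triples]
    constructor
    · rintro ⟨hxy, hzS, hz⟩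
      obtain ⟨hx, hy, hne⟩ := mem_offDiag.1 hxy
      obtain ⟨hmem, hcard, hsum⟩ := mem_offDiag_and_sum_eq_iff.2 ⟨hne, hz, rfl⟩
      exact ⟨_, ⟨by simp [insert_subset_iff, hx, hy, hzS], hcard, hsum⟩, hmem⟩
    · rintro ⟨T, ⟨hTS, hcard, hsum⟩, hxy⟩
      obtain ⟨-, hz, hT⟩ := mem_offDiag_and_sum_eq_iff.1 ⟨hxy, hcard, hsum⟩
      exact ⟨offDiag_mono hTS hxy, hTS (by rw [hT]; simp), hz⟩
  have hdisj : (triples : Set (Finset A)).PairwiseDisjoint offDiag := by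
    refine fun T hT T' hT' hne ↦ disjoint_left.2 fun _ hp hp' ↦ hne ?_
    obtain ⟨-, -, hTp⟩ := mem_offDiag_and_sum_eq_iff.1 ⟨hp, (mem_triples.1 hT).2⟩
    obtain ⟨-, -, hTp'⟩ := mem_offDiag_and_sum_eq_iff.1 ⟨hp', (mem_triples.1 hT').2⟩
    exact hTp.trans hTp'.symm
  rw [hpairs, card_biUnion hdisj, mul_comm]
  refine (sum_const_nat fun T hT ↦ ?_).symm
  rw [offDiag_card, (mem_triples.1 hT).2.1]

end Triples

section SumSq

variable {ι : Type*} {s : Finset ι} {b : ι → ℤ}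

theorem eq_sign_sum_of_sum_sq_eq_abs_sum (h : ∑ i ∈ s, b i ^ 2 = |∑ i ∈ s, b i|) {i : ι}
    (hi : i ∈ s) (hbi : b i ≠ 0) : b i = (∑ j ∈ s, b j).sign := by
  set ε := (∑ j ∈ s, b j).sign with hε
  have hle (x : ℤ) : ε * x ≤ x ^ 2 := by
    rcases Int.sign_trichotomy (∑ j ∈ s, b j) with h | h | h <;> rw [hε, h]
    · simpa using Int.le_self_sq x
    · simpa using sq_nonneg x
    · simpa using Int.le_self_sq (-x)
  have hsum : ∑ j ∈ s, ε * b j = ∑ j ∈ s, b j ^ 2 := by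
    rw [← mul_sum, h, Int.sign_mul_self_eq_abs]
  have heq : ε * b i = b i ^ 2 := (sum_eq_sum_iff_of_le fun j _ ↦ hle (b j)).1 hsum i hi
  exact (mul_right_cancel₀ hbi (heq.trans (sq (b i)))).symm

theorem card_filter_ne_zero_of_sum_sq_eq_abs_sum (h : ∑ i ∈ s, b i ^ 2 = |∑ i ∈ s, b i|) :
    #{i ∈ s | b i ≠ 0} = (∑ i ∈ s, b i).natAbs := by
  zify
  rw [← h, card_filter, Nat.cast_sum]
  refine sum_congr rfl fun i hi ↦ ?_
  split_ifs with hbi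
  · have hsign := eq_sign_sum_of_sum_sq_eq_abs_sum h hi hbi
    rcases Int.sign_trichotomy (∑ j ∈ s, b j) with h | h | h <;> simp_all
  · simp_all

end SumSq

theorem card_filter_mem_powersetCard {α : Type*} [DecidableEq α] {t : Finset α} {i : α}
    (hi : i ∈ t) (k : ℕ) : #{s ∈ t.powersetCard (k + 1) | i ∈ s} = (#t - 1).choose k := by
  simpa using card_filter_powersetCard_subset {i} t (k + 1) (by simpa) (by simp)

theorem B_eq (x y : Fin 7 → ℤ) : B x y = x 0 * y 0 - ∑ i : Fin 6, x i.succ * y i.succ := by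
  simp only [B, Fin.sum_univ_six, Fin.reduceSucc]
  ring

theorem K_zero : K 0 = -3 := rfl

theorem K_succ (i : Fin 6) : K i.succ = 1 := by
  revert i
  decide

theorem B_K (x : Fin 7 → ℤ) : B x K = -(3 * x 0 + ∑ i : Fin 6, x i.succ) := by
  simp only [B_eq, K_zero, K_succ, mul_one]
  ring

theorem B_K_K : B K K = 3 := by
  decide

theorem B_sum_right {ι : Type*} (s : Finset ι) (x : Fin 7 → ℤ) (f : ι → Fin 7 → ℤ) :
    B x (∑ i ∈ s, f i) = ∑ i ∈ s, B x (f i) := by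
  simp [B, mul_sum]

theorem sq_B_K_add_three_mul_le (x : Fin 7 → ℤ) :
    (B x K + 3 * x 0) ^ 2 ≤ 6 * (x 0 ^ 2 - B x x) := by
  have h := sq_sum_le_card_mul_sum_sq (s := univ) (f := fun i : Fin 6 ↦ x i.succ)
  rw [B_K, B_eq]
  simp only [card_univ, Fintype.card_fin, Nat.cast_ofNat, sq] at h ⊢
  linarith

theorem B_self_neg_of_B_K_eq_zero {x : Fin 7 → ℤ} (hxK : B x K = 0) (hx : x ≠ 0) :
    B x x < 0 := by
  have hle := sq_B_K_add_three_mul_le x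
  rw [hxK] at hle
  by_contra! hnonneg
  have hx₀ : x 0 = 0 := by nlinarith
  have hsq : ∑ i : Fin 6, x i.succ * x i.succ ≤ 0 := by simpa [B_eq, hx₀] using hnonneg
  have hx₁ : ∀ i : Fin 6, x i.succ = 0 := by
    simpa using (sum_eq_zero_iff_of_nonneg fun i _ ↦ mul_self_nonneg (x (Fin.succ i))).1
      (hsq.antisymm (sum_nonneg fun i _ ↦ mul_self_nonneg _))
  exact hx (funext (Fin.cases hx₀ hx₁))

theorem B_self_nonpos_of_B_K_eq_zero {x : Fin 7 → ℤ} (hxK : B x K = 0) : B x x ≤ 0 := by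
  rcases eq_or_ne x 0 with rfl | hx
  · simp [B]
  · exact (B_self_neg_of_B_K_eq_zero hxK hx).le

theorem isLine_iff {L : Fin 7 → ℤ} : IsLine L ↔
    ∑ i : Fin 6, L i.succ ^ 2 = L 0 ^ 2 + 1 ∧ ∑ i : Fin 6, L i.succ = 1 - 3 * L 0 := by
  rw [IsLine, B_K, B_eq]
  simp only [← sq]
  constructor <;> rintro ⟨h₁, h₂⟩ <;> constructor <;> linarith

theorem IsLine.B_nonneg {L M : Fin 7 → ℤ} (hL : IsLine L) (hM : IsLine M) (hne : L ≠ M) :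
    0 ≤ B L M := by
  have hK : B (L - M) K = B L K - B M K := by
    simp only [B, Pi.sub_apply]
    ring
  have hsq : B (L - M) (L - M) = B L L + B M M - 2 * B L M := by
    simp only [B, Pi.sub_apply]
    ring
  rw [hL.2, hM.2, sub_self] at hK
  have hneg := B_self_neg_of_B_K_eq_zero hK (sub_ne_zero.2 hne)
  rw [hsq, hL.1, hM.1] at hneg
  lia

theorem IsLine.B_le_one {L M : Fin 7 → ℤ} (hL : IsLine L) (hM : IsLine M) : B L M ≤ 1 := by
  -- `v` is three times the orthogonal projection of `L + M` to the complement of `K`.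
  set v := (3 : ℤ) • (L + M) + (2 : ℤ) • K with hv
  have hK : B v K = 3 * (B L K + B M K) + 2 * B K K := by
    simp only [hv, B, Pi.add_apply, Pi.smul_apply, smul_eq_mul]
    ring
  have hsq : B v v =
      9 * (B L L + 2 * B L M + B M M) + 12 * (B L K + B M K) + 4 * B K K := by
    simp only [hv, B, Pi.add_apply, Pi.smul_apply, smul_eq_mul]
    ring
  rw [hL.2, hM.2, B_K_K] at hK hsq
  have hnonpos := B_self_nonpos_of_B_K_eq_zero hK
  rw [hsq, hL.1, hM.1] at hnonpos
  lia

theorem IsLine.isLine_neg_K_sub_sub_iff {L M : Fin 7 → ℤ} (hL : IsLine L) (hM : IsLine M) :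
    IsLine (-K - L - M) ↔ B L M = 1 := by
  have hK : B (-K - L - M) K = -B K K - B L K - B M K := by
    simp only [B, Pi.sub_apply, Pi.neg_apply]
    ring
  have hsq : B (-K - L - M) (-K - L - M) =
      B K K + B L L + B M M + 2 * (B L K + B M K + B L M) := by
    simp only [B, Pi.sub_apply, Pi.neg_apply]
    ring
  rw [IsLine, hK, hsq, B_K_K, hL.1, hL.2, hM.1, hM.2]
  lia

theorem IsLine.ne_of_B_eq_one {L M : Fin 7 → ℤ} (hL : IsLine L) (hLM : B L M = 1) : L ≠ M := by
  rintro rfl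
  have := hL.1
  lia

theorem IsLine.neg_K_sub_sub_notMem_pair {L M : Fin 7 → ℤ} (hL : IsLine L) (hM : IsLine M)
    (hLM : B L M = 1) : -K - L - M ∉ ({L, M} : Finset (Fin 7 → ℤ)) := by
  have hBL : B L (-K - L - M) = -B L K - B L L - B L M := by
    simp only [B, Pi.sub_apply, Pi.neg_apply]
    ring
  have hBM : B M (-K - L - M) = -B M K - B L M - B M M := by
    simp only [B, Pi.sub_apply, Pi.neg_apply]
    ring
  rw [hL.2, hL.1, hLM] at hBL
  rw [hM.2, hM.1, hLM] at hBM
  simp only [mem_insert, mem_singleton, not_or]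
  exact ⟨(hL.ne_of_B_eq_one hBL).symm, (hM.ne_of_B_eq_one hBM).symm⟩

theorem IsLine.apply_zero_mem {L : Fin 7 → ℤ} (hL : IsLine L) : L 0 ∈ ({0, 1, 2} : Finset ℤ) := by
  have h := sq_B_K_add_three_mul_le L
  rw [hL.1, hL.2] at h
  have hnonneg : 0 ≤ L 0 := by nlinarith
  have hle : L 0 ≤ 2 := by nlinarith
  simp only [mem_insert, mem_singleton]
  lia

theorem sq_add_one_eq_abs {a : ℤ} (ha : a ∈ ({0, 1, 2} : Finset ℤ)) : a ^ 2 + 1 = |1 - 3 * a| := by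
  revert a
  decide

/-- The class `a ℓ ± ∑ i ∈ s, eᵢ`, where `ℓ` is the class of a line in the plane, the `eᵢ` are the
six exceptional classes, and the sign is that of `1 - 3 a`. If `a ∈ {0, 1, 2}` and `s` has
`|1 - 3 a|` elements, this is an exceptional curve (`a = 0`), the line through two of the blown-up
points (`a = 1`) or the conic through five of them (`a = 2`). -/
def lineClass (a : ℤ) (s : Finset (Fin 6)) : Fin 7 → ℤ :=
  Fin.cons a fun i ↦ if i ∈ s then (1 - 3 * a).sign else 0

@[simp]
theorem lineClass_zero (a : ℤ) (s : Finset (Fin 6)) : lineClass a s 0 = a := rfl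

@[simp]
theorem lineClass_succ (a : ℤ) (s : Finset (Fin 6)) (i : Fin 6) :
    lineClass a s i.succ = if i ∈ s then (1 - 3 * a).sign else 0 := rfl

theorem sign_one_sub_three_mul_ne_zero (a : ℤ) : (1 - 3 * a).sign ≠ 0 := by
  rw [Ne, Int.sign_eq_zero_iff_zero]
  lia

theorem lineClass_injective : Function.Injective2 lineClass := by
  intro a a' s s' h
  obtain ⟨rfl, hs⟩ := Fin.cons_injective2 h
  refine ⟨rfl, ?_⟩
  ext i
  have hi := congrFun hs i
  have := sign_one_sub_three_mul_ne_zero a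
  grind

theorem isLine_lineClass {a : ℤ} {s : Finset (Fin 6)} (ha : a ∈ ({0, 1, 2} : Finset ℤ))
    (hs : #s = (1 - 3 * a).natAbs) : IsLine (lineClass a s) := by
  have hcard : (#s : ℤ) = |1 - 3 * a| := by rw [hs, Int.natCast_natAbs]
  have hsign : (1 - 3 * a).sign ^ 2 = 1 := by
    rcases Int.sign_trichotomy (1 - 3 * a) with h | h | h
    · rw [h, one_pow]
    · exact absurd h (sign_one_sub_three_mul_ne_zero a)
    · rw [h, neg_one_sq]
  rw [isLine_iff]
  constructor
  · simp [ite_pow, hcard, hsign, sq_add_one_eq_abs ha]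
  · simp [hcard, mul_comm |1 - 3 * a|, Int.sign_mul_abs]

theorem IsLine.exists_eq_lineClass {L : Fin 7 → ℤ} (hL : IsLine L) :
    ∃ s : Finset (Fin 6), #s = (1 - 3 * L 0).natAbs ∧ lineClass (L 0) s = L := by
  obtain ⟨hsq, hsum⟩ := isLine_iff.1 hL
  have habs : ∑ i : Fin 6, L i.succ ^ 2 = |∑ i : Fin 6, L i.succ| := by
    rw [hsq, hsum, sq_add_one_eq_abs hL.apply_zero_mem]
  refine ⟨({i | L i.succ ≠ 0} : Finset (Fin 6)), ?_, ?_⟩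
  · rw [card_filter_ne_zero_of_sum_sq_eq_abs_sum habs, hsum]
  · refine funext (Fin.cases rfl fun i ↦ ?_)
    by_cases hi : L i.succ = 0
    · simp [hi]
    · rw [lineClass_succ, if_pos (by simpa using hi), ← hsum]
      exact (eq_sign_sum_of_sum_sq_eq_abs_sum habs (mem_univ i) hi).symm

/-- The finite set of the 27 lines, parametrized by their degree and by the blown-up points that
their classes involve. -/
def lines : Finset (Fin 7 → ℤ) :=
  (({0, 1, 2} : Finset ℤ).sigma fun a ↦ univ.powersetCard (1 - 3 * a).natAbs).image
    fun p ↦ lineClass p.1 p.2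

theorem mem_lines {L : Fin 7 → ℤ} : L ∈ lines ↔ IsLine L := by
  simp only [lines, mem_image, mem_sigma, mem_powersetCard_univ]
  constructor
  · rintro ⟨⟨a, s⟩, ⟨ha, hs⟩, rfl⟩
    exact isLine_lineClass ha hs
  · intro hL
    obtain ⟨s, hs, hLs⟩ := hL.exists_eq_lineClass
    exact ⟨⟨L 0, s⟩, ⟨hL.apply_zero_mem, hs⟩, hLs⟩

theorem sum_lines_eq_sum_lineClass {M : Type*} [AddCommMonoid M] (f : (Fin 7 → ℤ) → M) :
    ∑ L ∈ lines, f L =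
      ∑ a ∈ ({0, 1, 2} : Finset ℤ), ∑ s ∈ univ.powersetCard (1 - 3 * a).natAbs,
        f (lineClass a s) := by
  rw [lines, sum_image, sum_sigma]
  rintro ⟨a, s⟩ - ⟨a', s'⟩ - h
  obtain ⟨rfl, rfl⟩ := lineClass_injective h
  rfl

theorem card_lines : #lines = 27 := by
  rw [card_eq_sum_ones, sum_lines_eq_sum_lineClass]
  simp [Nat.choose]

theorem sum_lines_eq_smul_K : ∑ L ∈ lines, L = -9 • K := by
  rw [sum_lines_eq_sum_lineClass]
  refine funext (Fin.cases ?_ fun i ↦ ?_)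
  · simp [Finset.sum_apply, K, Nat.choose]
  · have hcount (k : ℕ) : #{s ∈ univ.powersetCard (k + 1) | i ∈ s} = Nat.choose 5 k :=
      card_filter_mem_powersetCard (mem_univ i) k
    simp [Finset.sum_apply, K_succ, ← sum_filter, hcount, Nat.choose, Int.sign_eq_one_of_pos]

theorem card_filter_B_eq_one {L : Fin 7 → ℤ} (hL : L ∈ lines) : #{M ∈ lines | B L M = 1} = 10 := by
  have hLL := mem_lines.1 hL
  have hB (M) (hM : M ∈ lines) :
      B L M = (if B L M = 1 then 1 else 0) - (if L = M then 1 else 0) := by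
    rcases eq_or_ne L M with rfl | hne
    · simp [hLL.1]
    · have h₀ := hLL.B_nonneg (mem_lines.1 hM) hne
      have h₁ := hLL.B_le_one (mem_lines.1 hM)
      obtain h | h : B L M = 0 ∨ B L M = 1 := by lia
      all_goals simp [h, hne]
  have hsum : ∑ M ∈ lines, B L M = 9 := by
    have hsmul : B L (-9 • K) = -9 * B L K := by
      simp only [B, Pi.smul_apply, smul_eq_mul]
      ring
    rw [← B_sum_right, sum_lines_eq_smul_K, hsmul, hLL.2]
    rfl
  rw [sum_congr rfl hB, sum_sub_distrib, sum_boole, sum_ite_eq, if_pos hL] at hsum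
  lia

theorem card_triples_sum_eq_neg_K : #{T ∈ lines.powersetCard 3 | ∑ L ∈ T, L = -K} = 45 := by
  have hpairs : {p ∈ lines.offDiag | -K - p.1 - p.2 ∈ lines \ {p.1, p.2}} =
      {p ∈ lines ×ˢ lines | B p.1 p.2 = 1} := by
    ext ⟨L, M⟩
    simp only [mem_filter, mem_offDiag, mem_product, mem_sdiff, mem_lines]
    constructor
    · rintro ⟨⟨hL, hM, -⟩, hN, -⟩
      exact ⟨⟨hL, hM⟩, (hL.isLine_neg_K_sub_sub_iff hM).1 hN⟩
    · rintro ⟨⟨hL, hM⟩, hLM⟩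
      exact ⟨⟨hL, hM, hL.ne_of_B_eq_one hLM⟩, (hL.isLine_neg_K_sub_sub_iff hM).2 hLM,
        hL.neg_K_sub_sub_notMem_pair hM hLM⟩
  have hcount : #{p ∈ lines ×ˢ lines | B p.1 p.2 = 1} = 27 * 10 := by
    rw [card_filter, sum_product, ← card_lines]
    refine sum_const_nat fun L hL ↦ ?_
    rw [← card_filter, card_filter_B_eq_one hL]
  have := six_mul_card_filter_sum_eq lines (-K)
  rw [hpairs, hcount] at this
  lia

/-- There are exactly 45 triangles. -/
theorem fortyfive_triangles :
    {T : Finset (Fin 7 → ℤ) | IsTriangle T}.Finite ∧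
      {T : Finset (Fin 7 → ℤ) | IsTriangle T}.ncard = 45 := by
  have htriangles : {T : Finset (Fin 7 → ℤ) | IsTriangle T} =
      ↑({T ∈ lines.powersetCard 3 | ∑ L ∈ T, L = -K} : Finset (Finset (Fin 7 → ℤ))) := by
    ext T
    simp only [Set.mem_ofPred_eq, IsTriangle, coe_filter, mem_powersetCard, subset_iff, mem_lines]
    tauto
  rw [htriangles, Set.ncard_coe_finset]
  exact ⟨finite_toSet _, card_triples_sum_eq_neg_K⟩
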